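/- Fix D ∈ ℍ^{m×n}, Ω ⊆ Fin m × Fin n, and λ > 0, and set λ₀ = min(λ, 1). Let A : ℕ → ℍ^{m×r}, B : ℕ → ℍ^{r×n}, X : ℕ → ℍ^{m×n} satisfy, for every k: X^k_{ij} = D_{ij} for (i,j) ∈ Ω and X^k_{ij} = (A^k·B^k)_{ij} otherwise; A^{k+1} = (X^k·(B^k)ᴴ + λ·A^k)·(B^k·(B^k)ᴴ + λ·I)⁻¹; and B^{k+1} = ((A^{k+1})ᴴ·A^{k+1} + λ·I)⁻¹·((A^{k+1})ᴴ·X^k + λ·B^k). Then ∑_{k=0}^∞ (‖A^k − A^{k+1}‖_F² + ‖B^k − B^{k+1}‖_F² + ‖X^k − X^{k+1}‖_F²) ≤ (2/λ₀)·½‖A⁰·B⁰ − X⁰‖_F² < ∞; consequently A^k − A^{k+1} → 0, B^k − B^{k+1} → 0, and X^k − X^{k+1} → 0 as k → ∞. -/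

import Mathlib

open scoped Quaternion Matrix
open Filter

/-- The Frobenius norm of a quaternion matrix. -/
noncomputable def frob {m n : ℕ} (A : Matrix (Fin m) (Fin n) ℍ[ℝ]) : ℝ :=
  Real.sqrt (∑ i, ∑ j, ‖A i j‖ ^ 2)

noncomputable def retr {n : ℕ} (P : Matrix (Fin n) (Fin n) ℍ[ℝ]) : ℝ := (∑ i, P i i).re

lemma re_sum {ι : Type*} (s : Finset ι) (f : ι → ℍ[ℝ]) : (∑ i ∈ s, f i).re = ∑ i ∈ s, (f i).re := by
  classical
  induction s using Finset.induction_on with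
  | empty => simp
  | insert a s ha ih => simp [Finset.sum_insert ha, ih]

lemma retr_comm {m n : ℕ} (P : Matrix (Fin m) (Fin n) ℍ[ℝ]) (Q : Matrix (Fin n) (Fin m) ℍ[ℝ]) :
    retr (P * Q) = retr (Q * P) := by
  simp only [retr, Matrix.mul_apply, re_sum]
  rw [Finset.sum_comm]
  refine Finset.sum_congr rfl fun i _ => Finset.sum_congr rfl fun j _ => ?_
  simp only [Quaternion.re_mul]
  ring

lemma retr_add {n : ℕ} (P Q : Matrix (Fin n) (Fin n) ℍ[ℝ]) : retr (P + Q) = retr P + retr Q := by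
  simp [retr, Finset.sum_add_distrib]

lemma retr_smul {n : ℕ} (c : ℝ) (P : Matrix (Fin n) (Fin n) ℍ[ℝ]) :
    retr (c • P) = c * retr P := by
  simp [retr, re_sum, Finset.mul_sum]

lemma retr_star {n : ℕ} (P : Matrix (Fin n) (Fin n) ℍ[ℝ]) : retr Pᴴ = retr P := by
  simp [retr, re_sum]

lemma frob_sq {m n : ℕ} (A : Matrix (Fin m) (Fin n) ℍ[ℝ]) :
    frob A ^ 2 = ∑ i, ∑ j, ‖A i j‖ ^ 2 :=
  Real.sq_sqrt (by positivity)

lemma frob_retr {m n : ℕ} (A : Matrix (Fin m) (Fin n) ℍ[ℝ]) : frob A ^ 2 = retr (Aᴴ * A) := by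
  rw [frob_sq, Finset.sum_comm]
  simp only [retr, Matrix.mul_apply, re_sum]
  refine Finset.sum_congr rfl fun i _ => Finset.sum_congr rfl fun j _ => ?_
  rw [Matrix.conjTranspose_apply, Quaternion.star_mul_self, Quaternion.re_coe,
    Quaternion.normSq_eq_norm_mul_self, sq]

lemma frob_add {m n : ℕ} (P Q : Matrix (Fin m) (Fin n) ℍ[ℝ]) :
    frob (P + Q) ^ 2 = frob P ^ 2 + frob Q ^ 2 + 2 * retr (Pᴴ * Q) := by
  have h : retr (Qᴴ * P) = retr (Pᴴ * Q) := by
    rw [← retr_star]; simp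
  simp only [frob_retr, Matrix.conjTranspose_add, Matrix.add_mul, Matrix.mul_add, retr_add, h]
  ring

lemma frob_eq_zero {m n : ℕ} {A : Matrix (Fin m) (Fin n) ℍ[ℝ]} (h : frob A ^ 2 ≤ 0) : A = 0 := by
  rw [frob_sq] at h
  ext1 i j
  have h0 : ∀ i j, 0 ≤ ‖A i j‖ ^ 2 := fun i j => by positivity
  have h1 := Finset.single_le_sum (f := fun j => ‖A i j‖ ^ 2) (fun j _ => h0 i j) (Finset.mem_univ j)
  have h2 := Finset.single_le_sum (f := fun i => ∑ j, ‖A i j‖ ^ 2)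
    (fun i _ => Finset.sum_nonneg fun j _ => h0 i j) (Finset.mem_univ i)
  have h3 : ‖A i j‖ ^ 2 = 0 := le_antisymm (h1.trans (h2.trans h)) (h0 i j)
  simpa using h3

lemma isUnit_reg {r n : ℕ} (C : Matrix (Fin n) (Fin r) ℍ[ℝ]) (lam : ℝ) (hlam : 0 < lam) :
    IsUnit (Cᴴ * C + lam • (1 : Matrix (Fin r) (Fin r) ℍ[ℝ])) := by
  set M := Cᴴ * C + lam • (1 : Matrix (Fin r) (Fin r) ℍ[ℝ]) with hM
  have key : ∀ N : Matrix (Fin r) (Fin r) ℍ[ℝ], M * N = 0 → N = 0 := by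
    intro N hN
    have h : retr (Nᴴ * (M * N)) = frob (C * N) ^ 2 + lam * frob N ^ 2 := by
      rw [frob_retr, frob_retr, ← retr_smul, ← retr_add]
      congr 1
      simp [hM, add_mul, mul_add, mul_assoc, Matrix.mul_assoc]
    rw [hN] at h
    have h' : retr (Nᴴ * 0) = 0 := by simp [retr]
    rw [h'] at h
    apply frob_eq_zero
    have := sq_nonneg (frob (C * N))
    by_contra hc
    have := mul_pos hlam (not_le.1 hc)
    linarith
  have inj : Function.Injective (LinearMap.mulLeft ℝ M) := by
    rw [injective_iff_map_eq_zero]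
    intro N hN
    exact key N hN
  obtain ⟨N, hN⟩ := (LinearMap.injective_iff_surjective.1 inj) 1
  have hN : M * N = 1 := hN
  have hN' : N * M = 1 := by
    rw [← sub_eq_zero]
    apply key
    rw [mul_sub, ← mul_assoc, hN]; simp
  exact ⟨⟨M, N, hN, hN'⟩, rfl⟩

lemma stepA {m r n : ℕ} (lam : ℝ) (hlam : 0 < lam) (A A' : Matrix (Fin m) (Fin r) ℍ[ℝ])
    (B : Matrix (Fin r) (Fin n) ℍ[ℝ]) (X : Matrix (Fin m) (Fin n) ℍ[ℝ])
    (hA : A' = (X * Bᴴ + lam • A) *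
      Ring.inverse (B * Bᴴ + lam • (1 : Matrix (Fin r) (Fin r) ℍ[ℝ]))) :
    frob (A' * B - X) ^ 2 + 2 * lam * frob (A - A') ^ 2 ≤ frob (A * B - X) ^ 2 := by
  have hu := isUnit_reg Bᴴ lam hlam
  rw [Matrix.conjTranspose_conjTranspose] at hu
  have h1 : A' * (B * Bᴴ + lam • (1 : Matrix (Fin r) (Fin r) ℍ[ℝ])) = X * Bᴴ + lam • A := by
    rw [hA, Matrix.mul_assoc, Ring.inverse_mul_cancel _ hu, Matrix.mul_one]
  have h2 : (A' * B - X) * Bᴴ = lam • (A - A') := by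
    rw [Matrix.mul_add, Matrix.mul_smul, Matrix.mul_one, ← Matrix.mul_assoc] at h1
    rw [Matrix.sub_mul, smul_sub, sub_eq_sub_iff_add_eq_add, h1, add_comm]
  have h3 : A * B - X = (A' * B - X) + (A - A') * B := by
    rw [Matrix.sub_mul]; abel
  have h4 : retr ((A' * B - X)ᴴ * ((A - A') * B)) = lam * frob (A - A') ^ 2 := by
    rw [frob_retr, ← retr_smul, ← Matrix.mul_assoc, retr_comm, ← Matrix.mul_assoc]
    have : B * (A' * B - X)ᴴ = lam • (A - A')ᴴ := by
      have := congrArg Matrix.conjTranspose h2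
      rw [Matrix.conjTranspose_mul, Matrix.conjTranspose_conjTranspose] at this
      rw [this]; ext1 i j; simp
    rw [this, Matrix.smul_mul]
  rw [h3, frob_add, h4]
  have := sq_nonneg (frob ((A - A') * B))
  linarith

lemma stepB {m r n : ℕ} (lam : ℝ) (hlam : 0 < lam) (A : Matrix (Fin m) (Fin r) ℍ[ℝ])
    (B B' : Matrix (Fin r) (Fin n) ℍ[ℝ]) (X : Matrix (Fin m) (Fin n) ℍ[ℝ])
    (hB : B' = Ring.inverse (Aᴴ * A + lam • (1 : Matrix (Fin r) (Fin r) ℍ[ℝ])) *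
      (Aᴴ * X + lam • B)) :
    frob (A * B' - X) ^ 2 + 2 * lam * frob (B - B') ^ 2 ≤ frob (A * B - X) ^ 2 := by
  have hu := isUnit_reg A lam hlam
  have h1 : (Aᴴ * A + lam • (1 : Matrix (Fin r) (Fin r) ℍ[ℝ])) * B' = Aᴴ * X + lam • B := by
    rw [hB, ← Matrix.mul_assoc, Ring.mul_inverse_cancel _ hu, Matrix.one_mul]
  have h2 : Aᴴ * (A * B' - X) = lam • (B - B') := by
    rw [Matrix.add_mul, Matrix.smul_mul, Matrix.one_mul, Matrix.mul_assoc] at h1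
    rw [Matrix.mul_sub, smul_sub, sub_eq_sub_iff_add_eq_add, h1, add_comm]
  have h3 : A * B - X = (A * B' - X) + A * (B - B') := by
    rw [Matrix.mul_sub]; abel
  have h4 : retr ((A * B' - X)ᴴ * (A * (B - B'))) = lam * frob (B - B') ^ 2 := by
    rw [frob_retr, ← retr_smul, ← Matrix.mul_assoc]
    have : (A * B' - X)ᴴ * A = lam • (B - B')ᴴ := by
      have := congrArg Matrix.conjTranspose h2
      rw [Matrix.conjTranspose_mul, Matrix.conjTranspose_conjTranspose] at this
      rw [this]; ext1 i j; simp
    rw [this, Matrix.smul_mul]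
  rw [h3, frob_add, h4]
  have := sq_nonneg (frob (A * (B - B')))
  linarith

/-- Square-summability of successive differences along the LRQD iteration, and
convergence of the successive differences to zero. -/
theorem successive_differences_summable {m r n : ℕ}
    (D : Matrix (Fin m) (Fin n) ℍ[ℝ]) (Ω : Set (Fin m × Fin n))
    (lam : ℝ) (hlam : 0 < lam)
    (A : ℕ → Matrix (Fin m) (Fin r) ℍ[ℝ]) (B : ℕ → Matrix (Fin r) (Fin n) ℍ[ℝ])
    (X : ℕ → Matrix (Fin m) (Fin n) ℍ[ℝ])
    (hXin : ∀ k, ∀ p ∈ Ω, X k p.1 p.2 = D p.1 p.2)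
    (hXout : ∀ k, ∀ p : Fin m × Fin n, p ∉ Ω → X k p.1 p.2 = (A k * B k) p.1 p.2)
    (hA : ∀ k, A (k + 1) = (X k * (B k)ᴴ + lam • A k) *
      Ring.inverse (B k * (B k)ᴴ + lam • (1 : Matrix (Fin r) (Fin r) ℍ[ℝ])))
    (hB : ∀ k, B (k + 1) =
      Ring.inverse ((A (k + 1))ᴴ * A (k + 1) + lam • (1 : Matrix (Fin r) (Fin r) ℍ[ℝ])) *
      ((A (k + 1))ᴴ * X k + lam • B k)) :
    Summable (fun k => frob (A k - A (k + 1)) ^ 2 + frob (B k - B (k + 1)) ^ 2 +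
        frob (X k - X (k + 1)) ^ 2) ∧
    (∑' k, (frob (A k - A (k + 1)) ^ 2 + frob (B k - B (k + 1)) ^ 2 +
        frob (X k - X (k + 1)) ^ 2)) ≤
      (2 / min lam 1) * ((1 / 2) * frob (A 0 * B 0 - X 0) ^ 2) ∧
    Tendsto (fun k => frob (A k - A (k + 1))) atTop (nhds 0) ∧
    Tendsto (fun k => frob (B k - B (k + 1))) atTop (nhds 0) ∧
    Tendsto (fun k => frob (X k - X (k + 1))) atTop (nhds 0) := by
  have hl0 : 0 < min lam 1 := lt_min hlam one_pos
  set s : ℕ → ℝ := fun k => frob (A k - A (k + 1)) ^ 2 + frob (B k - B (k + 1)) ^ 2 +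
        frob (X k - X (k + 1)) ^ 2 with hs
  set F : ℕ → ℝ := fun k => frob (A k * B k - X k) ^ 2 with hF
  have hs0 : ∀ k, 0 ≤ s k := fun k => by simp only [hs]; positivity
  have hF0 : ∀ k, 0 ≤ F k := fun k => by simp only [hF]; positivity
  have hstep : ∀ k, min lam 1 * s k ≤ F k - F (k + 1) := by
    intro k
    have a := stepA lam hlam _ _ _ _ (hA k)
    have b := stepB lam hlam _ _ _ _ (hB k)
    have c : frob (A (k + 1) * B (k + 1) - X k) ^ 2 = F (k + 1) + frob (X k - X (k + 1)) ^ 2 := by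
      simp only [hF, frob_sq, ← Finset.sum_add_distrib]
      refine Finset.sum_congr rfl fun i _ => Finset.sum_congr rfl fun j _ => ?_
      simp only [Matrix.sub_apply]
      by_cases h : (i, j) ∈ Ω
      · have e1 := hXin k _ h
        have e2 := hXin (k + 1) _ h
        simp only at e1 e2
        simp [e1, e2]
      · have e2 := hXout (k + 1) _ h
        simp only at e2
        rw [← e2, norm_sub_rev]
        simp
    have l1 : min lam 1 ≤ lam := min_le_left _ _
    have l2 : min lam 1 ≤ 1 := min_le_right _ _
    have u := sq_nonneg (frob (A k - A (k + 1)))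
    have v := sq_nonneg (frob (B k - B (k + 1)))
    have w := sq_nonneg (frob (X k - X (k + 1)))
    have u1 := mul_le_mul_of_nonneg_right l1 u
    have v1 := mul_le_mul_of_nonneg_right l1 v
    have w1 := mul_le_mul_of_nonneg_right l2 w
    have u2 := mul_nonneg hlam.le u
    have v2 := mul_nonneg hlam.le v
    simp only [hs, hF] at c ⊢
    linarith
  have hbd : ∀ N, ∑ k ∈ Finset.range N, s k ≤ (2 / min lam 1) * ((1 / 2) * F 0) := by
    intro N
    have h1 : ∑ k ∈ Finset.range N, min lam 1 * s k ≤ F 0 - F N := by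
      rw [← Finset.sum_range_sub']
      exact Finset.sum_le_sum fun k _ => hstep k
    rw [← Finset.mul_sum] at h1
    have h2 : (2 / min lam 1) * ((1 / 2) * F 0) = F 0 / min lam 1 := by ring
    rw [h2, le_div_iff₀ hl0]
    have := hF0 N
    linarith
  have hsum : Summable s := summable_of_sum_range_le hs0 hbd
  have ht := hsum.tendsto_atTop_zero
  have aux : ∀ g : ℕ → ℝ, (∀ k, 0 ≤ g k) → (∀ k, g k ^ 2 ≤ s k) → Tendsto g atTop (nhds 0) := by
    intro g g0 hg
    have h1 : Tendsto (fun k => g k ^ 2) atTop (nhds 0) :=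
      squeeze_zero (fun k => sq_nonneg _) hg ht
    have h2 := h1.sqrt
    simpa [Real.sqrt_sq (g0 _)] using h2
  have u := fun k => sq_nonneg (frob (A k - A (k + 1)))
  have v := fun k => sq_nonneg (frob (B k - B (k + 1)))
  have w := fun k => sq_nonneg (frob (X k - X (k + 1)))
  refine ⟨hsum, hsum.tsum_le_of_sum_range_le hbd, ?_, ?_, ?_⟩
  · exact aux _ (fun k => Real.sqrt_nonneg _)
      (fun k => by simp only [hs]; linarith [u k, v k, w k])
  · exact aux _ (fun k => Real.sqrt_nonneg _)
      (fun k => by simp only [hs]; linarith [u k, v k, w k])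
  · exact aux _ (fun k => Real.sqrt_nonneg _)
      (fun k => by simp only [hs]; linarith [u k, v k, w k])
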